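/- For any symmetric positive definite matrices A and M, any integer p ≥ 0 and any τ > 0, the bilinear form L(u,v) := B(u,Pv) satisfies, for all v, w ∈ V_p: L(v,v) ≥ ‖v‖²_D and |L(v,w)| ≤ 2 ‖v‖_D ‖w‖_D, where ‖v‖_D := √D(v,v) and D(u,v) := ∫_{−1}^{1} ((I u)'(s), (I v)'(s))_{MA⁻¹M} ds + (τ²/4) ∫_{−1}^{1} (u(s), v(s))_A ds. -/

import Mathlib

open Matrix Polynomial

/-- The `k`-th Legendre polynomial (Rodrigues' formula), normalized so that `L_k(1) = 1`. -/
noncomputable def legendre (k : ℕ) : Polynomial ℝ :=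
  ((2 ^ k * (Nat.factorial k) : ℝ))⁻¹ •
    ((fun q => Polynomial.derivative q)^[k] ((Polynomial.X ^ 2 - 1) ^ k))

/-- Evaluation at `s` of the `ℝⁿ`-valued polynomial with coefficients `c` (degree ≤ p). -/
noncomputable def pev {n p : ℕ} (c : Fin (p + 1) → Fin n → ℝ) (s : ℝ) : Fin n → ℝ :=
  ∑ j : Fin (p + 1), s ^ (j : ℕ) • c j

/-- Evaluation at `s` of the derivative of the `ℝⁿ`-valued polynomial with coefficients `c`. -/
noncomputable def pdev {n p : ℕ} (c : Fin (p + 1) → Fin n → ℝ) (s : ℝ) : Fin n → ℝ :=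
  ∑ j : Fin (p + 1), ((((j : ℕ) : ℝ)) * s ^ ((j : ℕ) - 1)) • c j

/-- Evaluation at `s` of `(I v)'`, the derivative of the reconstruction `I v` of the
`ℝⁿ`-valued polynomial `v` with coefficients `c`, where the reconstruction operator
`I v := v − v(−1)·(−1)^p (L_p − L_{p+1})/2` acts coefficientwise. -/
noncomputable def reconD {n p : ℕ} (c : Fin (p + 1) → Fin n → ℝ) (s : ℝ) : Fin n → ℝ :=
  pdev c s -
    ((-1 : ℝ) ^ p * (Polynomial.derivative (legendre p - legendre (p + 1))).eval s / 2) •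
      pev c (-1)

/-- The DG bilinear form `B(u, ·)` applied to a test function `g : ℝ → ℝⁿ`:
`B(u,g) = ∫_{−1}^{1} (u'(s), g(s))_M ds + (u(−1), g(−1))_M + (τ/2) ∫_{−1}^{1} (u(s), g(s))_A ds`,
where `(u,v)_M := vᵀ M u`. -/
noncomputable def Bform {n p : ℕ} (M A : Matrix (Fin n) (Fin n) ℝ) (τ : ℝ)
    (c : Fin (p + 1) → Fin n → ℝ) (g : ℝ → Fin n → ℝ) : ℝ :=
  (∫ s in (-1 : ℝ)..1, g s ⬝ᵥ (M *ᵥ pdev c s)) + g (-1) ⬝ᵥ (M *ᵥ pev c (-1)) +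
    (τ / 2) * ∫ s in (-1 : ℝ)..1, g s ⬝ᵥ (A *ᵥ pev c s)

/-- The operator `P v := A⁻¹ M (I v)' + (τ/2) v`, evaluated at `s`. -/
noncomputable def Pop {n p : ℕ} (M A : Matrix (Fin n) (Fin n) ℝ) (τ : ℝ)
    (c : Fin (p + 1) → Fin n → ℝ) (s : ℝ) : Fin n → ℝ :=
  (A⁻¹ * M) *ᵥ reconD c s + (τ / 2) • pev c s

/-- The auxiliary bilinear form
`D(u,v) := ∫_{−1}^{1} ((I u)'(s), (I v)'(s))_{MA⁻¹M} ds + (τ²/4) ∫_{−1}^{1} (u(s), v(s))_A ds`. -/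
noncomputable def Dform {n p : ℕ} (M A : Matrix (Fin n) (Fin n) ℝ) (τ : ℝ)
    (c d : Fin (p + 1) → Fin n → ℝ) : ℝ :=
  (∫ s in (-1 : ℝ)..1, reconD d s ⬝ᵥ ((M * A⁻¹ * M) *ᵥ reconD c s)) +
    (τ ^ 2 / 4) * ∫ s in (-1 : ℝ)..1, pev d s ⬝ᵥ (A *ᵥ pev c s)


lemma W_facA (k : ℕ) : ((X:ℝ[X]) ^ 2 - 1) ^ k = (X - C (1:ℝ)) ^ k * (X + C 1) ^ k := by
  rw [← mul_pow]; congr 1; simp; ring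

lemma W_facB (k : ℕ) : ((X:ℝ[X]) ^ 2 - 1) ^ k = (X - C (-1:ℝ)) ^ k * (X - C 1) ^ k := by
  rw [← mul_pow]; congr 1; simp; ring

lemma W_evalA (k j : ℕ) (h : j < k) :
    (derivative^[j] (((X:ℝ[X]) ^ 2 - 1) ^ k)).eval 1 = 0 := by
  have := aeval_iterate_derivative_of_lt (A := ℝ) (((X:ℝ[X]) ^ 2 - 1) ^ k) k (1:ℝ)
    (p' := (X + C 1) ^ k) (by simpa using W_facA k) h
  simpa using this

lemma W_evalB (k j : ℕ) (h : j < k) :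
    (derivative^[j] (((X:ℝ[X]) ^ 2 - 1) ^ k)).eval (-1) = 0 := by
  have := aeval_iterate_derivative_of_lt (A := ℝ) (((X:ℝ[X]) ^ 2 - 1) ^ k) k (-1:ℝ)
    (p' := (X - C 1) ^ k) (by simpa using W_facB k) h
  simpa using this

lemma legendre_one (k : ℕ) : (legendre k).eval 1 = 1 := by
  have := aeval_iterate_derivative_self (A := ℝ) (((X:ℝ[X]) ^ 2 - 1) ^ k) k (1:ℝ)
    (p' := (X + C 1) ^ k) (by simpa using W_facA k)
  have h2 : (derivative^[k] (((X:ℝ[X]) ^ 2 - 1) ^ k)).eval (1:ℝ) = (k.factorial:ℝ) * 2 ^ k := by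
    norm_num at this
    simpa [one_add_one_eq_two] using this
  have h3 : (k.factorial : ℝ) ≠ 0 := by positivity
  simp only [legendre, eval_smul, smul_eq_mul]
  rw [h2]; field_simp

lemma legendre_neg_one (k : ℕ) : (legendre k).eval (-1) = (-1) ^ k := by
  have := aeval_iterate_derivative_self (A := ℝ) (((X:ℝ[X]) ^ 2 - 1) ^ k) k (-1:ℝ)
    (p' := (X - C 1) ^ k) (by simpa using W_facB k)
  have h2 : (derivative^[k] (((X:ℝ[X]) ^ 2 - 1) ^ k)).eval (-1:ℝ) = (k.factorial:ℝ) * (-2) ^ k := by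
    norm_num at this
    simpa using this
  have h3 : (k.factorial : ℝ) ≠ 0 := by positivity
  simp only [legendre, eval_smul, smul_eq_mul]
  rw [h2, neg_pow (2:ℝ)]; field_simp

lemma poly_ibp (q r : ℝ[X]) :
    ∫ s in (-1:ℝ)..1, q.eval s * (derivative r).eval s =
      q.eval 1 * r.eval 1 - q.eval (-1) * r.eval (-1)
        - ∫ s in (-1:ℝ)..1, (derivative q).eval s * r.eval s := by
  refine intervalIntegral.integral_mul_deriv_eq_deriv_mul (u := fun s => q.eval s)
    (v := fun s => r.eval s) (u' := fun s => (derivative q).eval s)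
    (v' := fun s => (derivative r).eval s) ?_ ?_ ?_ ?_
  · intro x _; exact q.hasDerivAt x
  · intro x _; exact r.hasDerivAt x
  · exact (derivative q).continuous.intervalIntegrable _ _
  · exact (derivative r).continuous.intervalIntegrable _ _

lemma W_orth (k j : ℕ) (h : j ≤ k) : ∀ q : ℝ[X], derivative^[j] q = 0 →
    ∫ s in (-1:ℝ)..1, q.eval s * (derivative^[j] (((X:ℝ[X]) ^ 2 - 1) ^ k)).eval s = 0 := by
  induction j with
  | zero => intro q hq; simp at hq; simp [hq]
  | succ j ih =>
    intro q hq
    rw [Function.iterate_succ_apply', poly_ibp, W_evalA k j h, W_evalB k j h,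
      ih (by omega) (derivative q) (by simpa using hq)]
    simp

lemma legendre_orth (k : ℕ) (q : ℝ[X]) (hq : derivative^[k] q = 0) :
    ∫ s in (-1:ℝ)..1, q.eval s * (legendre k).eval s = 0 := by
  have := W_orth k k le_rfl q hq
  simp only [legendre, eval_smul, smul_eq_mul]
  simp_rw [mul_left_comm]
  rw [intervalIntegral.integral_const_mul, this, mul_zero]

/-- scalar functions that are polynomials of degree at most `p`. -/
def IsPol (p : ℕ) (f : ℝ → ℝ) : Prop := ∃ q : ℝ[X], q.natDegree ≤ p ∧ ∀ s, f s = q.eval s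

lemma IsPol.add {p : ℕ} {f g : ℝ → ℝ} (hf : IsPol p f) (hg : IsPol p g) :
    IsPol p (fun s => f s + g s) := by
  obtain ⟨q, hq, h⟩ := hf
  obtain ⟨r, hr, h'⟩ := hg
  exact ⟨q + r, natDegree_add_le_of_degree_le hq hr, fun s => by simp [h, h']⟩

lemma IsPol.const_mul {p : ℕ} {f : ℝ → ℝ} (a : ℝ) (hf : IsPol p f) :
    IsPol p (fun s => a * f s) := by
  obtain ⟨q, hq, h⟩ := hf
  exact ⟨C a * q, (natDegree_C_mul_le _ _).trans hq, fun s => by simp [h]⟩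

lemma IsPol.sum {p : ℕ} {ι : Type} (t : Finset ι) {f : ι → ℝ → ℝ} (hf : ∀ i, IsPol p (f i)) :
    IsPol p (fun s => ∑ i ∈ t, f i s) := by
  classical
  induction t using Finset.induction_on with
  | empty => exact ⟨0, by simp, by simp⟩
  | insert a t ha ih =>
    simp_rw [Finset.sum_insert ha]
    exact (hf a).add ih

lemma IsPol.continuous {p : ℕ} {f : ℝ → ℝ} (hf : IsPol p f) : Continuous f := by
  obtain ⟨q, hq, h⟩ := hf
  rw [funext h]; exact q.continuous

/-- the derivative of the reconstruction weight -/
noncomputable def psiD (p : ℕ) (s : ℝ) : ℝ :=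
  (-1 : ℝ) ^ p * (Polynomial.derivative (legendre p - legendre (p + 1))).eval s / 2

lemma psiD_integral (p : ℕ) (h : ℝ → ℝ) (hh : IsPol p h) :
    ∫ s in (-1:ℝ)..1, h s * psiD p s = - h (-1) := by
  obtain ⟨q, hq, h'⟩ := hh
  have e : ∀ s, h s * psiD p s = ((-1:ℝ)^p / 2) * (q.eval s *
      (derivative (legendre p - legendre (p + 1))).eval s) := by
    intro s; rw [h' s, psiD]; ring
  have z : derivative^[p] (derivative q) = 0 := by
    rw [← Function.iterate_succ_apply]
    exact iterate_derivative_eq_zero (by omega)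
  have z' : derivative^[p+1] (derivative q) = 0 := by
    rw [Function.iterate_succ_apply', z]; simp
  have o : ∫ s in (-1:ℝ)..1, (derivative q).eval s * (legendre p - legendre (p + 1)).eval s
      = 0 := by
    simp_rw [eval_sub, mul_sub]
    rw [intervalIntegral.integral_sub, legendre_orth _ _ z, legendre_orth _ _ z', sub_zero]
    · exact (((derivative q).continuous).mul (legendre p).continuous).intervalIntegrable _ _
    · exact (((derivative q).continuous).mul (legendre (p+1)).continuous).intervalIntegrable _ _
  simp_rw [e]
  rw [intervalIntegral.integral_const_mul, poly_ibp, o, h' (-1)]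
  simp only [eval_sub, legendre_one, legendre_neg_one, pow_succ]
  have : ((-1:ℝ)^p) * (-1)^p = 1 := by rw [← mul_pow]; simp
  linear_combination (-(q.eval (-1))) * this

lemma legendre_natDegree (k : ℕ) : (legendre k).natDegree ≤ k := by
  refine (natDegree_smul_le _ _).trans ((natDegree_iterate_derivative _ _).trans ?_)
  have : (((X:ℝ[X]) ^ 2 - 1) ^ k).natDegree ≤ k * 2 := by
    refine natDegree_pow_le_of_le k ?_
    compute_degree
  omega

lemma psiD_isPol (p : ℕ) : IsPol p (psiD p) := by
  refine ⟨C ((-1:ℝ)^p/2) * derivative (legendre p - legendre (p + 1)), ?_, ?_⟩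
  · refine (natDegree_C_mul_le _ _).trans ((natDegree_derivative_le _).trans ?_)
    have : (legendre p - legendre (p + 1)).natDegree ≤ p + 1 :=
      (natDegree_sub_le _ _).trans
        (max_le ((legendre_natDegree p).trans (Nat.le_succ p)) (legendre_natDegree _))
    omega
  · intro s; simp [psiD]; ring

section
variable {n p : ℕ}

lemma pev_isPol (c : Fin (p + 1) → Fin n → ℝ) (i : Fin n) : IsPol p (fun s => pev c s i) := by
  have : (fun s => pev c s i) = fun s => ∑ j : Fin (p+1), c j i * s ^ (j:ℕ) := by
    funext s; simp [pev, Finset.sum_apply, mul_comm]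
  rw [this]
  refine IsPol.sum _ fun j => IsPol.const_mul _ ⟨X ^ (j:ℕ), ?_, by simp⟩
  simp; omega

lemma pdev_isPol (c : Fin (p + 1) → Fin n → ℝ) (i : Fin n) : IsPol p (fun s => pdev c s i) := by
  have : (fun s => pdev c s i) = fun s => ∑ j : Fin (p+1), (c j i * (j:ℕ)) * s ^ ((j:ℕ)-1) := by
    funext s; simp only [pdev, Finset.sum_apply, Pi.smul_apply, smul_eq_mul]
    refine Finset.sum_congr rfl fun j _ => by ring
  rw [this]
  refine IsPol.sum _ fun j => IsPol.const_mul _ ⟨X ^ ((j:ℕ)-1), ?_, by simp⟩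
  rw [natDegree_X_pow]; omega

lemma reconD_eq (c : Fin (p + 1) → Fin n → ℝ) (s : ℝ) :
    reconD c s = pdev c s - psiD p s • pev c (-1) := rfl

lemma reconD_isPol (c : Fin (p + 1) → Fin n → ℝ) (i : Fin n) :
    IsPol p (fun s => reconD c s i) := by
  have := (pdev_isPol c i).add ((psiD_isPol p).const_mul (-(pev c (-1) i)))
  convert this using 2 with s
  simp [reconD_eq]; ring

lemma Pop_isPol (M A : Matrix (Fin n) (Fin n) ℝ) (τ : ℝ) (c : Fin (p + 1) → Fin n → ℝ)
    (i : Fin n) : IsPol p (fun s => Pop M A τ c s i) := by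
  simp only [Pop, Pi.add_apply, Pi.smul_apply, smul_eq_mul, mulVec, dotProduct]
  exact (IsPol.sum _ fun j => (reconD_isPol c j).const_mul _).add ((pev_isPol c i).const_mul _)

lemma cont_form (M : Matrix (Fin n) (Fin n) ℝ) {f g : ℝ → Fin n → ℝ} (hf : Continuous f)
    (hg : Continuous g) : Continuous (fun s => f s ⬝ᵥ (M *ᵥ g s)) :=
  hf.dotProduct (continuous_const.matrix_mulVec hg)

lemma cont_of {f : ℝ → Fin n → ℝ} (h : ∀ i, IsPol p (fun s => f s i)) : Continuous f :=
  continuous_pi fun i => (h i).continuous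

lemma key (M : Matrix (Fin n) (Fin n) ℝ) (c : Fin (p + 1) → Fin n → ℝ) (g : ℝ → Fin n → ℝ)
    (hg : ∀ i, IsPol p (fun s => g s i)) :
    ∫ s in (-1:ℝ)..1, g s ⬝ᵥ (M *ᵥ reconD c s) =
      (∫ s in (-1:ℝ)..1, g s ⬝ᵥ (M *ᵥ pdev c s)) + g (-1) ⬝ᵥ (M *ᵥ pev c (-1)) := by
  have hh : IsPol p (fun s => g s ⬝ᵥ (M *ᵥ pev c (-1))) := by
    have := IsPol.sum Finset.univ fun i => (hg i).const_mul ((M *ᵥ pev c (-1)) i)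
    convert this using 2 with s
    simp [dotProduct, mul_comm]
  have e : ∀ s, g s ⬝ᵥ (M *ᵥ reconD c s) = g s ⬝ᵥ (M *ᵥ pdev c s) -
      (g s ⬝ᵥ (M *ᵥ pev c (-1))) * psiD p s := by
    intro s
    rw [reconD_eq, mulVec_sub, mulVec_smul, dotProduct_sub, dotProduct_smul, smul_eq_mul, mul_comm]
  simp_rw [e]
  rw [intervalIntegral.integral_sub, psiD_integral p _ hh, sub_neg_eq_add]
  · exact (cont_form M (cont_of hg) (cont_of (pdev_isPol c))).intervalIntegrable _ _
  · exact (hh.continuous.mul (psiD_isPol p).continuous).intervalIntegrable _ _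

lemma pev_hasDerivAt (c : Fin (p + 1) → Fin n → ℝ) (s : ℝ) :
    HasDerivAt (pev c) (pdev c s) s := by
  unfold pev pdev
  exact HasDerivAt.fun_sum fun j _ => (hasDerivAt_pow (j:ℕ) s).smul_const (c j)

lemma symm_form {M : Matrix (Fin n) (Fin n) ℝ} (hM : M.PosDef) (x y : Fin n → ℝ) :
    x ⬝ᵥ (M *ᵥ y) = y ⬝ᵥ (M *ᵥ x) := by
  have : Mᵀ = M := by simpa using hM.isHermitian.eq
  rw [dotProduct_mulVec, ← mulVec_transpose, this, dotProduct_comm]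

lemma nonneg_form {M : Matrix (Fin n) (Fin n) ℝ} (hM : M.PosDef) (x : Fin n → ℝ) :
    0 ≤ x ⬝ᵥ (M *ᵥ x) := by
  simpa using hM.posSemidef.dotProduct_mulVec_nonneg x

lemma energy {M : Matrix (Fin n) (Fin n) ℝ} (hM : M.PosDef) (c : Fin (p + 1) → Fin n → ℝ) :
    0 ≤ ∫ s in (-1:ℝ)..1, pev c s ⬝ᵥ (M *ᵥ reconD c s) := by
  rw [key M c _ (pev_isPol c)]
  have hd : ∀ s, HasDerivAt (fun s => pev c s ⬝ᵥ (M *ᵥ pev c s))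
      (2 * (pev c s ⬝ᵥ (M *ᵥ pdev c s))) s := by
    intro s
    have h1 : ∀ i, HasDerivAt (fun s => pev c s i) (pdev c s i) s :=
      hasDerivAt_pi.1 (pev_hasDerivAt c s)
    have h2 : ∀ i, HasDerivAt (fun s => (M *ᵥ pev c s) i) ((M *ᵥ pdev c s) i) s := by
      intro i
      simp only [mulVec, dotProduct]
      exact HasDerivAt.fun_sum fun j _ => (h1 j).const_mul _
    have h3 : HasDerivAt (fun s => pev c s ⬝ᵥ (M *ᵥ pev c s))
        (∑ i, (pdev c s i * (M *ᵥ pev c s) i + pev c s i * (M *ᵥ pdev c s) i)) s :=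
      HasDerivAt.fun_sum fun i _ => (h1 i).mul (h2 i)
    convert h3 using 1
    rw [Finset.sum_add_distrib, two_mul]
    congr 1
    exact symm_form hM _ _
  have hc := cont_form M (cont_of (pev_isPol c)) (cont_of (pdev_isPol c))
  have := intervalIntegral.integral_eq_sub_of_hasDerivAt (a := -1) (b := 1) (fun s _ => hd s)
    ((continuous_const.mul hc).intervalIntegrable _ _)
  rw [intervalIntegral.integral_const_mul] at this
  have := nonneg_form hM (pev c 1)
  have := nonneg_form hM (pev c (-1))
  linarith

lemma A_Pop (M : Matrix (Fin n) (Fin n) ℝ) {A : Matrix (Fin n) (Fin n) ℝ} (hA : A.PosDef) (τ : ℝ)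
    (c : Fin (p + 1) → Fin n → ℝ) (s : ℝ) :
    A *ᵥ Pop M A τ c s = M *ᵥ reconD c s + (τ / 2) • (A *ᵥ pev c s) := by
  have hu : IsUnit A.det := (Matrix.isUnit_iff_isUnit_det A).1 hA.isUnit
  rw [Pop, mulVec_add, mulVec_smul, mulVec_mulVec, ← Matrix.mul_assoc,
    Matrix.mul_nonsing_inv _ hu, Matrix.one_mul]

lemma B_eq (M : Matrix (Fin n) (Fin n) ℝ) {A : Matrix (Fin n) (Fin n) ℝ} (hA : A.PosDef) (τ : ℝ)
    (c : Fin (p + 1) → Fin n → ℝ) (g : ℝ → Fin n → ℝ) (hg : ∀ i, IsPol p (fun s => g s i)) :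
    Bform M A τ c g = ∫ s in (-1:ℝ)..1, g s ⬝ᵥ (A *ᵥ Pop M A τ c s) := by
  simp_rw [A_Pop M hA, dotProduct_add, dotProduct_smul, smul_eq_mul]
  rw [intervalIntegral.integral_add, intervalIntegral.integral_const_mul, key M c g hg, Bform]
  · exact (cont_form M (cont_of hg) (cont_of (reconD_isPol c))).intervalIntegrable _ _
  · exact (continuous_const.mul
      (cont_form A (cont_of hg) (cont_of (pev_isPol c)))).intervalIntegrable _ _

lemma cs {A : Matrix (Fin n) (Fin n) ℝ} (hA : A.PosDef) (f g : ℝ → Fin n → ℝ)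
    (hf : Continuous f) (hg : Continuous g) :
    (∫ s in (-1:ℝ)..1, g s ⬝ᵥ (A *ᵥ f s)) ^ 2 ≤
      (∫ s in (-1:ℝ)..1, f s ⬝ᵥ (A *ᵥ f s)) * ∫ s in (-1:ℝ)..1, g s ⬝ᵥ (A *ᵥ g s) := by
  set a := ∫ s in (-1:ℝ)..1, f s ⬝ᵥ (A *ᵥ f s) with ha
  set b := ∫ s in (-1:ℝ)..1, g s ⬝ᵥ (A *ᵥ f s) with hb
  set d := ∫ s in (-1:ℝ)..1, g s ⬝ᵥ (A *ᵥ g s) with hd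
  have h : ∀ t : ℝ, 0 ≤ a * (t * t) + (2 * b) * t + d := by
    intro t
    have e : a * (t * t) + (2 * b) * t + d =
        ∫ s in (-1:ℝ)..1, (t • f s + g s) ⬝ᵥ (A *ᵥ (t • f s + g s)) := by
      have e' : ∀ s, (t • f s + g s) ⬝ᵥ (A *ᵥ (t • f s + g s)) =
          (t * t) * (f s ⬝ᵥ (A *ᵥ f s)) + (2 * t) * (g s ⬝ᵥ (A *ᵥ f s)) +
            g s ⬝ᵥ (A *ᵥ g s) := by
        intro s
        simp only [mulVec_add, mulVec_smul, dotProduct_add, add_dotProduct, dotProduct_smul,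
          smul_dotProduct, smul_eq_mul]
        rw [symm_form hA (f s) (g s)]; ring
      simp_rw [e']
      have c1 := cont_form A hf hf
      have c2 := cont_form A hg hf
      have c3 := cont_form A hg hg
      rw [intervalIntegral.integral_add, intervalIntegral.integral_add,
        intervalIntegral.integral_const_mul, intervalIntegral.integral_const_mul]
      · ring
      · exact (continuous_const.mul c1).intervalIntegrable _ _
      · exact (continuous_const.mul c2).intervalIntegrable _ _
      · exact ((continuous_const.mul c1).add (continuous_const.mul c2)).intervalIntegrable _ _
      · exact c3.intervalIntegrable _ _
    rw [e]
    exact intervalIntegral.integral_nonneg (by norm_num) fun s _ => nonneg_form hA _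
  have := discrim_le_zero h
  rw [discrim] at this
  linarith

lemma D_eq {M A : Matrix (Fin n) (Fin n) ℝ} (hM : M.PosDef) (hA : A.PosDef) (τ : ℝ)
    (c : Fin (p + 1) → Fin n → ℝ) :
    Dform M A τ c c = (∫ s in (-1:ℝ)..1, (Pop M A τ c s) ⬝ᵥ (A *ᵥ Pop M A τ c s)) -
      τ * ∫ s in (-1:ℝ)..1, pev c s ⬝ᵥ (M *ᵥ reconD c s) := by
  have hu : IsUnit A.det := (Matrix.isUnit_iff_isUnit_det A).1 hA.isUnit
  have e : ∀ s, (Pop M A τ c s) ⬝ᵥ (A *ᵥ Pop M A τ c s) =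
      reconD c s ⬝ᵥ ((M * A⁻¹ * M) *ᵥ reconD c s) + (τ ^ 2 / 4) * (pev c s ⬝ᵥ (A *ᵥ pev c s)) +
        τ * (pev c s ⬝ᵥ (M *ᵥ reconD c s)) := by
    intro s
    rw [A_Pop M hA, Pop]
    simp only [dotProduct_add, add_dotProduct, dotProduct_smul, smul_dotProduct, smul_eq_mul]
    have h1 : ((A⁻¹ * M) *ᵥ reconD c s) ⬝ᵥ (M *ᵥ reconD c s) =
        reconD c s ⬝ᵥ ((M * A⁻¹ * M) *ᵥ reconD c s) := by
      rw [symm_form hM, mulVec_mulVec, Matrix.mul_assoc]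
    have h2 : ((A⁻¹ * M) *ᵥ reconD c s) ⬝ᵥ (A *ᵥ pev c s) = pev c s ⬝ᵥ (M *ᵥ reconD c s) := by
      rw [symm_form hA, mulVec_mulVec, ← Matrix.mul_assoc,
        Matrix.mul_nonsing_inv _ hu, Matrix.one_mul]
    rw [h1, h2]; ring
  have cr := cont_of (reconD_isPol c)
  have cp := cont_of (pev_isPol c)
  have c1 := cont_form (M * A⁻¹ * M) cr cr
  have c2 := cont_form A cp cp
  have c3 := cont_form M cp cr
  simp_rw [e]
  rw [intervalIntegral.integral_add, intervalIntegral.integral_add,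
    intervalIntegral.integral_const_mul, intervalIntegral.integral_const_mul, Dform]
  · ring
  · exact c1.intervalIntegrable _ _
  · exact (continuous_const.mul c2).intervalIntegrable _ _
  · exact (c1.add (continuous_const.mul c2)).intervalIntegrable _ _
  · exact (continuous_const.mul c3).intervalIntegrable _ _

lemma Pop_neg (M A : Matrix (Fin n) (Fin n) ℝ) (τ : ℝ) (c : Fin (p + 1) → Fin n → ℝ) :
    Dform M A (-τ) c c = Dform M A τ c c := by
  simp [Dform]

lemma L_le {M A : Matrix (Fin n) (Fin n) ℝ} (hM : M.PosDef) (hA : A.PosDef) (τ : ℝ)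
    (c : Fin (p + 1) → Fin n → ℝ) :
    (∫ s in (-1:ℝ)..1, (Pop M A τ c s) ⬝ᵥ (A *ᵥ Pop M A τ c s)) ≤ 2 * Dform M A τ c c := by
  have h1 := D_eq hM hA τ c
  have h2 := D_eq hM hA (-τ) c
  rw [Pop_neg] at h2
  have h3 : 0 ≤ ∫ s in (-1:ℝ)..1, (Pop M A (-τ) c s) ⬝ᵥ (A *ᵥ Pop M A (-τ) c s) :=
    intervalIntegral.integral_nonneg (by norm_num) fun s _ => nonneg_form hA _
  linarith

end

/-- **Bounds for `L` in terms of `D`.** For any symmetric positive definite `A`, `M`, any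
`p ≥ 0` and any `τ > 0`, the form `L(u,v) := B(u, P v)` satisfies, for all `v, w ∈ V_p`,
`L(v,v) ≥ ‖v‖²_D` and `|L(v,w)| ≤ 2 ‖v‖_D ‖w‖_D`, where `‖v‖_D := √D(v,v)`. -/
theorem Lform_Dform_bounds {n p : ℕ} (M A : Matrix (Fin n) (Fin n) ℝ)
    (hM : M.PosDef) (hA : A.PosDef) (τ : ℝ) (hτ : 0 < τ)
    (c d : Fin (p + 1) → Fin n → ℝ) :
    Dform M A τ c c ≤ Bform M A τ c (fun s => Pop M A τ c s) ∧
      |Bform M A τ c (fun s => Pop M A τ d s)|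
        ≤ 2 * Real.sqrt (Dform M A τ c c) * Real.sqrt (Dform M A τ d d) := by
  have hP := fun e : Fin (p + 1) → Fin n → ℝ => Pop_isPol M A τ e
  have low : ∀ e : Fin (p + 1) → Fin n → ℝ, Dform M A τ e e ≤
      ∫ s in (-1:ℝ)..1, (Pop M A τ e s) ⬝ᵥ (A *ᵥ Pop M A τ e s) := by
    intro e
    rw [D_eq hM hA]
    have := mul_nonneg hτ.le (energy hM e)
    linarith
  have nn : ∀ e : Fin (p + 1) → Fin n → ℝ, 0 ≤
      ∫ s in (-1:ℝ)..1, (Pop M A τ e s) ⬝ᵥ (A *ᵥ Pop M A τ e s) := fun e =>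
    intervalIntegral.integral_nonneg (by norm_num) fun s _ => nonneg_form hA _
  rw [B_eq M hA τ c _ (hP c), B_eq M hA τ c _ (hP d)]
  refine ⟨low c, ?_⟩
  have h := cs hA (Pop M A τ c) (Pop M A τ d) (cont_of (hP c)) (cont_of (hP d))
  have hc := L_le hM hA τ c
  have hd := L_le hM hA τ d
  have hc0 : 0 ≤ Dform M A τ c c := by linarith [nn c]
  have hd0 : 0 ≤ Dform M A τ d d := by linarith [nn d]
  apply abs_le_of_sq_le_sq _ (by positivity)
  rw [mul_pow, mul_pow, Real.sq_sqrt hc0, Real.sq_sqrt hd0]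
  have := mul_le_mul hc hd (nn d) (by linarith)
  linarith
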